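/- Let Σ be a finite mode set and suppose that for every j ∈ Σ the matrix Q_j is symmetric negative definite and the closed-loop dissipation matrix Γ_j is positive definite. Then the switched linear system ẋ(t) = Â_{σ(t)}x(t) + B̂_{σ(t)}w(t), y(t) = C_{σ(t)}x(t) + D_{σ(t)}w(t) is L2-stable under arbitrary switching: there exist a, b > 0, depending only on the system and dissipativity matrices, such that for every T > 0, every piecewise-constant switching signal σ : [0,T] → Σ, every continuous w : [0,T] → ℝᵖ, and every differentiable solution x : [0,T] → ℝⁿ, it holds that ∫₀ᵀ ‖y(t)‖² dt ≤ a ∫₀ᵀ ‖w(t)‖² dt + b · x(0)'P x(0). -/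

import Mathlib

open Matrix

/-- The closed-loop dissipation matrix Γ: a symmetric 2×2 block matrix with blocks
Γ₁₁ = C'QC − PÂ − Â'P, Γ₁₂ = C'QD + C'S − PB̂, Γ₂₂ = D'QD + D'S + S'D + R. -/
noncomputable def dissipationMatrix {n p q : ℕ}
    (P Ahat : Matrix (Fin n) (Fin n) ℝ) (Bhat : Matrix (Fin n) (Fin p) ℝ)
    (C : Matrix (Fin q) (Fin n) ℝ) (D : Matrix (Fin q) (Fin p) ℝ)
    (Q : Matrix (Fin q) (Fin q) ℝ) (S : Matrix (Fin q) (Fin p) ℝ)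
    (R : Matrix (Fin p) (Fin p) ℝ) :
    Matrix (Fin n ⊕ Fin p) (Fin n ⊕ Fin p) ℝ :=
  Matrix.fromBlocks
    (Cᵀ * Q * C - P * Ahat - Ahatᵀ * P)
    (Cᵀ * Q * D + Cᵀ * S - P * Bhat)
    ((Cᵀ * Q * D + Cᵀ * S - P * Bhat)ᵀ)
    (Dᵀ * Q * D + Dᵀ * S + Sᵀ * D + R)

/-- A switching signal is piecewise constant on a set if it is locally
constant there except at finitely many (switching) instants. -/
def PiecewiseConstantOn {α : Type*} (σ : ℝ → α) (s : Set ℝ) : Prop :=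
  ∃ F : Finset ℝ, ∀ t ∈ s, t ∉ F → ∀ᶠ u in nhds t, σ u = σ t

open MeasureTheory Set

section QuadraticForms

variable {k l : Type*} [Fintype k] [Fintype l]

lemma dotProduct_transpose_mulVec_eq (A : Matrix k l ℝ) (x : l → ℝ) (v : k → ℝ) :
    x ⬝ᵥ (Aᵀ *ᵥ v) = (A *ᵥ x) ⬝ᵥ v := by
  rw [dotProduct_mulVec, vecMul_transpose]

lemma Matrix.IsSymm.dotProduct_mulVec_comm {M : Matrix k k ℝ} (hM : M.IsSymm) (u v : k → ℝ) :
    u ⬝ᵥ (M *ᵥ v) = v ⬝ᵥ (M *ᵥ u) := by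
  conv_lhs => rw [← hM.eq, dotProduct_transpose_mulVec_eq, dotProduct_comm]

lemma dotProduct_self_nonneg_real (v : k → ℝ) : 0 ≤ v ⬝ᵥ v :=
  Finset.sum_nonneg fun i _ => mul_self_nonneg (v i)

/-- A quadratic form is bounded by a multiple of the squared Euclidean norm. -/
lemma exists_dotProduct_mulVec_le (N : Matrix k k ℝ) :
    ∃ K > (0 : ℝ), ∀ v, v ⬝ᵥ (N *ᵥ v) ≤ K * (v ⬝ᵥ v) := by
  have hsum : 0 ≤ ∑ i, ∑ j, |N i j| :=
    Finset.sum_nonneg fun i _ => Finset.sum_nonneg fun j _ => abs_nonneg _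
  refine ⟨∑ i, ∑ j, |N i j| + 1, by linarith, fun v => ?_⟩
  have hv (i : k) : v i ^ 2 ≤ v ⬝ᵥ v := by
    rw [sq]
    exact Finset.single_le_sum (f := fun i => v i * v i) (fun i _ => mul_self_nonneg _)
      (Finset.mem_univ i)
  have key : v ⬝ᵥ (N *ᵥ v) ≤ (∑ i, ∑ j, |N i j|) * (v ⬝ᵥ v) := by
    simp only [dotProduct.eq_1 v (N *ᵥ v), mulVec.eq_1 N, dotProduct.eq_1 (fun j => N _ j),
      Finset.mul_sum, Finset.sum_mul]
    refine Finset.sum_le_sum fun i _ => Finset.sum_le_sum fun j _ => ?_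
    calc v i * (N i j * v j) ≤ |v i * (N i j * v j)| := le_abs_self _
      _ = |N i j| * |v i * v j| := by simp only [abs_mul]; ring
      _ ≤ |N i j| * (v ⬝ᵥ v) := by
        refine mul_le_mul_of_nonneg_left ?_ (abs_nonneg _)
        rw [abs_le]
        constructor <;> nlinarith [hv i, hv j, sq_nonneg (v i + v j), sq_nonneg (v i - v j)]
  linarith [dotProduct_self_nonneg_real v]

open scoped MatrixOrder in
/-- A positive definite quadratic form is coercive. -/
lemma Matrix.PosDef.exists_mul_dotProduct_self_le [DecidableEq k] {M : Matrix k k ℝ}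
    (hM : M.PosDef) : ∃ δ > (0 : ℝ), ∀ v, δ * (v ⬝ᵥ v) ≤ v ⬝ᵥ (M *ᵥ v) := by
  obtain ⟨B, hB⟩ := CStarAlgebra.nonneg_iff_eq_star_mul_self.mp hM.posSemidef.nonneg
  rw [star_eq_conjTranspose] at hB
  have hBu : IsUnit B.det := by
    have h := hM.det_pos
    rw [hB, det_mul] at h
    exact isUnit_iff_ne_zero.mpr (right_ne_zero_of_mul h.ne')
  obtain ⟨K, hK, hbound⟩ := exists_dotProduct_mulVec_le (B⁻¹ᵀ * B⁻¹)
  refine ⟨K⁻¹, inv_pos.mpr hK, fun v => ?_⟩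
  rw [inv_mul_le_iff₀ hK]
  have h := hbound (B *ᵥ v)
  rw [← mulVec_mulVec, dotProduct_transpose_mulVec_eq, mulVec_mulVec, nonsing_inv_mul _ hBu,
    one_mulVec] at h
  rwa [hB, conjTranspose_eq_transpose_of_trivial, ← mulVec_mulVec, dotProduct_transpose_mulVec_eq]

/-- A supply rate with negative definite output weight is bounded by an `L²`-gain supply rate. -/
lemma exists_supplyRate_le [DecidableEq k] {Q : Matrix k k ℝ} (hQ : (-Q).PosDef)
    (S : Matrix k l ℝ) (R : Matrix l l ℝ) :
    ∃ ε > (0 : ℝ), ∃ K > (0 : ℝ), ∀ y w,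
      y ⬝ᵥ (Q *ᵥ y) + 2 * (y ⬝ᵥ (S *ᵥ w)) + w ⬝ᵥ (R *ᵥ w) ≤ K * (w ⬝ᵥ w) - ε * (y ⬝ᵥ y) := by
  obtain ⟨δ, hδ, hcoer⟩ := hQ.exists_mul_dotProduct_self_le
  obtain ⟨K, hK, hbound⟩ := exists_dotProduct_mulVec_le (R + (2 / δ) • (Sᵀ * S))
  refine ⟨δ / 2, half_pos hδ, K, hK, fun y w => ?_⟩
  have h₁ := hcoer y
  have h₂ := hbound w
  have h₃ := dotProduct_self_nonneg_real (y - (2 / δ) • (S *ᵥ w))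
  simp only [neg_mulVec, dotProduct_neg] at h₁
  simp only [add_mulVec, smul_mulVec, dotProduct_add, dotProduct_smul, ← mulVec_mulVec,
    dotProduct_transpose_mulVec_eq, smul_eq_mul] at h₂
  simp only [sub_dotProduct, dotProduct_sub, smul_dotProduct, dotProduct_smul, smul_eq_mul,
    dotProduct_comm (S *ᵥ w) y] at h₃
  have h₄ := mul_nonneg (half_pos hδ).le h₃
  have h₅ : δ / 2 * (y ⬝ᵥ y - 2 / δ * (y ⬝ᵥ (S *ᵥ w)) -
      2 / δ * (y ⬝ᵥ (S *ᵥ w) - 2 / δ * ((S *ᵥ w) ⬝ᵥ (S *ᵥ w)))) =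
      δ / 2 * (y ⬝ᵥ y) - 2 * (y ⬝ᵥ (S *ᵥ w)) + 2 / δ * ((S *ᵥ w) ⬝ᵥ (S *ᵥ w)) := by
    field_simp
    ring
  linarith

omit [Fintype k] in
lemma ContinuousOn.matrix_mulVec_const {f : ℝ → l → ℝ} {s : Set ℝ} (hf : ContinuousOn f s)
    (M : Matrix k l ℝ) : ContinuousOn (fun t => M *ᵥ f t) s :=
  (continuous_const.matrix_mulVec continuous_id).comp_continuousOn hf

lemma ContinuousOn.dotProduct_self {f : ℝ → k → ℝ} {s : Set ℝ} (hf : ContinuousOn f s) :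
    ContinuousOn (fun t => f t ⬝ᵥ f t) s :=
  (continuous_id.dotProduct continuous_id).comp_continuousOn hf

lemma HasDerivAt.dotProduct_mulVec_self {M : Matrix k k ℝ} (hM : M.IsSymm) {x : ℝ → k → ℝ}
    {x' : k → ℝ} {t : ℝ} (hx : HasDerivAt x x' t) :
    HasDerivAt (fun s => x s ⬝ᵥ (M *ᵥ x s)) (2 * (x t ⬝ᵥ (M *ᵥ x'))) t := by
  have hi := hasDerivAt_pi.mp hx
  have h : HasDerivAt (fun s => x s ⬝ᵥ (M *ᵥ x s)) (x' ⬝ᵥ (M *ᵥ x t) + x t ⬝ᵥ (M *ᵥ x')) t := by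
    simp only [dotProduct, mulVec, ← Finset.sum_add_distrib]
    exact HasDerivAt.fun_sum fun i _ =>
      (hi i).mul (HasDerivAt.fun_sum fun j _ => (hi j).const_mul (M i j))
  rwa [hM.dotProduct_mulVec_comm x' (x t), ← two_mul] at h

end QuadraticForms

/-- Positive semidefiniteness of the dissipation matrix gives the dissipation inequality. -/
lemma dissipation_inequality {n p q : ℕ}
    {P A : Matrix (Fin n) (Fin n) ℝ} {B : Matrix (Fin n) (Fin p) ℝ}
    {C : Matrix (Fin q) (Fin n) ℝ} {D : Matrix (Fin q) (Fin p) ℝ}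
    {Q : Matrix (Fin q) (Fin q) ℝ} {S : Matrix (Fin q) (Fin p) ℝ}
    {R : Matrix (Fin p) (Fin p) ℝ} (hP : P.IsSymm) (hQ : Q.IsSymm)
    (hΓ : (dissipationMatrix P A B C D Q S R).PosSemidef) (x : Fin n → ℝ) (w : Fin p → ℝ) :
    2 * (x ⬝ᵥ (P *ᵥ (A *ᵥ x + B *ᵥ w))) ≤
      (C *ᵥ x + D *ᵥ w) ⬝ᵥ (Q *ᵥ (C *ᵥ x + D *ᵥ w)) +
        2 * ((C *ᵥ x + D *ᵥ w) ⬝ᵥ (S *ᵥ w)) + w ⬝ᵥ (R *ᵥ w) := by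
  have h := hΓ.dotProduct_mulVec_nonneg (Sum.elim x w)
  simp only [dissipationMatrix, star_trivial, fromBlocks_mulVec, Sum.elim_comp_inl,
    Sum.elim_comp_inr, sumElim_dotProduct_sumElim, transpose_sub, transpose_add, transpose_mul,
    transpose_transpose, hP.eq, hQ.eq, add_mulVec, sub_mulVec, dotProduct_add, dotProduct_sub,
    ← mulVec_mulVec, dotProduct_transpose_mulVec_eq] at h
  simp only [mulVec_add, dotProduct_add, add_dotProduct]
  rw [hQ.dotProduct_mulVec_comm (D *ᵥ w) (C *ᵥ x)] at h ⊢
  rw [hP.dotProduct_mulVec_comm (A *ᵥ x) x, hP.dotProduct_mulVec_comm (B *ᵥ w) x,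
    dotProduct_comm (S *ᵥ w) (C *ᵥ x), dotProduct_comm (S *ᵥ w) (D *ᵥ w)] at h
  linarith

/-- Selecting among finitely many continuous functions along a piecewise constant signal gives an
integrable function. -/
lemma PiecewiseConstantOn.integrableOn_Icc {ι : Type*} [Fintype ι] {σ : ℝ → ι} {a b : ℝ}
    (hσ : PiecewiseConstantOn σ (Icc a b)) {f : ι → ℝ → ℝ}
    (hf : ∀ j, ContinuousOn (f j) (Icc a b)) :
    IntegrableOn (fun t => f (σ t) t) (Icc a b) := by
  obtain ⟨F, hF⟩ := hσ
  have hdom : IntegrableOn (fun t => ∑ j, |f j t|) (Icc a b) :=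
    (continuousOn_finsetSum _ fun j _ => (hf j).abs).integrableOn_Icc
  have hcont : ContinuousOn (fun t => f (σ t) t) (Icc a b \ F) := fun t ht =>
    ((hf (σ t) t ht.1).mono sdiff_subset).congr_of_eventuallyEq
      (Filter.Eventually.filter_mono nhdsWithin_le_nhds
        ((hF t ht.1 ht.2).mono fun u hu => by simp only [hu])) rfl
  have hae : (Icc a b \ F : Set ℝ) =ᵐ[volume] Icc a b :=
    sdiff_null_ae_eq_self (F.finite_toSet.measure_zero volume)
  have hmeas : AEStronglyMeasurable (fun t => f (σ t) t) (volume.restrict (Icc a b)) := by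
    rw [← Measure.restrict_congr_set hae]
    exact hcont.aestronglyMeasurable (measurableSet_Icc.diff F.measurableSet)
  exact hdom.mono' hmeas (.of_forall fun t =>
    Finset.single_le_sum (f := fun j => |f j t|) (fun j _ => abs_nonneg _) (Finset.mem_univ (σ t)))

/-- If Q_j is symmetric negative definite and the closed-loop
dissipation matrix Γ_j is positive definite for every mode j, then the
switched linear system ẋ = Â_σ x + B̂_σ w, y = C_σ x + D_σ w is L2-stable
under arbitrary (piecewise constant) switching:
∫₀ᵀ ‖y‖² ≤ a ∫₀ᵀ ‖w‖² + b x(0)'P x(0) for constants a, b > 0 depending only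
on the system and dissipativity matrices. -/
theorem L2_stability_of_switched_linear_system
    {n p q : ℕ} {ι : Type*} [Fintype ι]
    (Ahat : ι → Matrix (Fin n) (Fin n) ℝ)
    (Bhat : ι → Matrix (Fin n) (Fin p) ℝ)
    (C : ι → Matrix (Fin q) (Fin n) ℝ)
    (D : ι → Matrix (Fin q) (Fin p) ℝ)
    (P : Matrix (Fin n) (Fin n) ℝ)
    (Q : ι → Matrix (Fin q) (Fin q) ℝ)
    (S : ι → Matrix (Fin q) (Fin p) ℝ)
    (R : ι → Matrix (Fin p) (Fin p) ℝ)
    (hP : P.PosDef)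
    (hQsym : ∀ j, (Q j).IsSymm)
    (hQneg : ∀ j, (-(Q j)).PosDef)
    (hRsym : ∀ j, (R j).IsSymm)
    (hΓ : ∀ j, (dissipationMatrix P (Ahat j) (Bhat j) (C j) (D j)
      (Q j) (S j) (R j)).PosDef) :
    ∃ a > (0:ℝ), ∃ b > (0:ℝ),
      ∀ (T : ℝ), 0 < T →
      ∀ (σ : ℝ → ι), PiecewiseConstantOn σ (Set.Icc 0 T) →
      ∀ (w : ℝ → Fin p → ℝ), ContinuousOn w (Set.Icc 0 T) →
      ∀ (x : ℝ → Fin n → ℝ),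
        (∀ t ∈ Set.Icc (0:ℝ) T,
          HasDerivAt x (Ahat (σ t) *ᵥ x t + Bhat (σ t) *ᵥ w t) t) →
        (∫ t in (0:ℝ)..T,
            (C (σ t) *ᵥ x t + D (σ t) *ᵥ w t) ⬝ᵥ
              (C (σ t) *ᵥ x t + D (σ t) *ᵥ w t)) ≤
          a * (∫ t in (0:ℝ)..T, w t ⬝ᵥ w t) + b * (x 0 ⬝ᵥ (P *ᵥ x 0)) := by
  have hPs : P.IsSymm := by simpa using hP.isHermitian
  choose ε hε K hK hsupply using fun j => exists_supplyRate_le (hQneg j) (S j) (R j)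
  obtain ⟨ε₀, hε₀, hε₀le⟩ : ∃ ε₀ > (0 : ℝ), ∀ j, ε₀ ≤ ε j := by
    rcases isEmpty_or_nonempty ι with _ | _
    · exact ⟨1, one_pos, isEmptyElim⟩
    · obtain ⟨j, hj⟩ := Finite.exists_min ε
      exact ⟨ε j, hε j, hj⟩
  obtain ⟨K₀, hK₀, hK₀le⟩ : ∃ K₀ > (0 : ℝ), ∀ j, K j ≤ K₀ := by
    rcases isEmpty_or_nonempty ι with _ | _
    · exact ⟨1, one_pos, isEmptyElim⟩
    · obtain ⟨j, hj⟩ := Finite.exists_max K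
      exact ⟨K j, hK j, hj⟩
  refine ⟨K₀ / ε₀, div_pos hK₀ hε₀, 1 / ε₀, one_div_pos.mpr hε₀, ?_⟩
  intro T hT σ hσ w hw x hx
  have hxc : ContinuousOn x (Icc 0 T) := fun t ht => (hx t ht).continuousAt.continuousWithinAt
  have hyint : IntegrableOn (fun t => (C (σ t) *ᵥ x t + D (σ t) *ᵥ w t) ⬝ᵥ
      (C (σ t) *ᵥ x t + D (σ t) *ᵥ w t)) (Icc 0 T) := by
    refine hσ.integrableOn_Icc (f := fun j t => (C j *ᵥ x t + D j *ᵥ w t) ⬝ᵥ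
      (C j *ᵥ x t + D j *ᵥ w t)) fun j => ?_
    have hy := (hxc.matrix_mulVec_const (C j)).add (hw.matrix_mulVec_const (D j))
    exact hy.dotProduct_self
  have hwint : IntegrableOn (fun t => w t ⬝ᵥ w t) (Icc 0 T) :=
    hw.dotProduct_self.integrableOn_Icc
  have hV (t : ℝ) (ht : t ∈ Icc 0 T) := (hx t ht).dotProduct_mulVec_self hPs
  have hstorage := intervalIntegral.sub_le_integral_of_hasDeriv_right_of_le hT.le
    (fun t ht => (hV t ht).continuousAt.continuousWithinAt)
    (fun t ht => (hV t (Ioo_subset_Icc_self ht)).hasDerivWithinAt)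
    ((hwint.const_mul K₀).sub (hyint.const_mul ε₀))
    (fun t _ => by
      have h₁ := dissipation_inequality hPs (hQsym (σ t)) (hΓ (σ t)).posSemidef (x t) (w t)
      have h₂ := hsupply (σ t) (C (σ t) *ᵥ x t + D (σ t) *ᵥ w t) (w t)
      have h₃ := mul_le_mul_of_nonneg_right (hK₀le (σ t)) (dotProduct_self_nonneg_real (w t))
      have h₄ := mul_le_mul_of_nonneg_right (hε₀le (σ t))
        (dotProduct_self_nonneg_real (C (σ t) *ᵥ x t + D (σ t) *ᵥ w t))
      simp only [Pi.sub_apply]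
      linarith)
  have hyint' := (intervalIntegrable_iff_integrableOn_Icc_of_le hT.le).mpr hyint
  have hwint' := (intervalIntegrable_iff_integrableOn_Icc_of_le hT.le).mpr hwint
  simp only [Pi.sub_apply] at hstorage
  rw [intervalIntegral.integral_sub (hwint'.const_mul K₀) (hyint'.const_mul ε₀),
    intervalIntegral.integral_const_mul, intervalIntegral.integral_const_mul] at hstorage
  have hVT : 0 ≤ x T ⬝ᵥ (P *ᵥ x T) := hP.posSemidef.dotProduct_mulVec_nonneg (x T)
  rw [div_mul_eq_mul_div, div_mul_eq_mul_div, ← add_div, le_div_iff₀ hε₀]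
  linarith
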